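/- arXiv:1512.00715 — 2 statements merged into one kernel-verified Lean document; each statement's English description precedes it below -/
import Mathlib

section
/- Let q, r, ξ₀ be real numbers with q ≠ 0, r ≠ 0 and r² − 4q = 0. Then on any open interval of ξ where r(ξ+ξ₀) ≠ 0, r(ξ+ξ₀) + 2 ≠ 0 and −2(r(ξ+ξ₀) + 2)/(r²(ξ+ξ₀)) > 0, the function Φ(ξ) = ln(−2(r(ξ+ξ₀) + 2)/(r²(ξ+ξ₀))) is differentiable and satisfies the auxiliary ODE Φ'(ξ) = exp(−Φ(ξ)) + q·exp(Φ(ξ)) + r. -/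
/-!
The substitution `w = exp Φ` turns the auxiliary equation into the Riccati equation
`w' = p + r w + q w²`. When the quadratic on the right has a double root, completing the square
makes this `v' = q v²` for `v = w + r / (2 q)`, which is solved by `v = -1 / (q x)`. The equation is
autonomous, so the solution may be translated by `ξ₀`.
-/

theorem hasDerivAt_log_of_riccati {p q r ξ : ℝ} {w : ℝ → ℝ} (hpos : 0 < w ξ)
    (hw : HasDerivAt w (p + r * w ξ + q * w ξ ^ 2) ξ) :
    HasDerivAt (fun x => Real.log (w x))
      (p * Real.exp (-Real.log (w ξ)) + q * Real.exp (Real.log (w ξ)) + r) ξ := by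
  refine (hw.log hpos.ne').congr_deriv ?_
  rw [Real.exp_neg, Real.exp_log hpos]
  field_simp
  ring

theorem quadratic_eq_mul_sq_of_discrim_eq_zero {K : Type*} [Field K] [NeZero (2 : K)] {a b c : K}
    (ha : a ≠ 0) (h : discrim a b c = 0) (x : K) :
    c + b * x + a * x ^ 2 = a * (x + b / (2 * a)) ^ 2 := by
  have hb : b ^ 2 = 4 * a * c := sub_eq_zero.mp h
  have h2 : (2 : K) ≠ 0 := two_ne_zero
  field_simp
  linear_combination -hb

section NormedField

variable {𝕜 : Type*} [NontriviallyNormedField 𝕜]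

theorem hasDerivAt_neg_inv_mul {q x : 𝕜} (hq : q ≠ 0) (hx : x ≠ 0) :
    HasDerivAt (fun y => -(q * y)⁻¹) (q * (-(q * x)⁻¹) ^ 2) x := by
  refine (((hasDerivAt_id x).const_mul q).fun_inv (mul_ne_zero hq hx)).fun_neg.congr_deriv ?_
  simp only [id]
  field_simp

theorem hasDerivAt_riccati_of_discrim_eq_zero [NeZero (2 : 𝕜)] {p q r x : 𝕜} (hq : q ≠ 0)
    (hx : x ≠ 0) (hdisc : discrim q r p = 0) :
    HasDerivAt (fun y => -(r * y + 2) / (2 * q * y))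
      (p + r * (-(r * x + 2) / (2 * q * x)) + q * (-(r * x + 2) / (2 * q * x)) ^ 2) x := by
  have hsplit : ∀ y ≠ 0, -(r * y + 2) / (2 * q * y) = -(q * y)⁻¹ - r / (2 * q) := by
    intro y hy
    have h2 : (2 : 𝕜) ≠ 0 := two_ne_zero
    field_simp
    ring
  rw [quadratic_eq_mul_sq_of_discrim_eq_zero hq hdisc, hsplit x hx, sub_add_cancel]
  exact ((hasDerivAt_neg_inv_mul hq hx).sub_const _).congr_of_eventuallyEq
    ((eventually_ne_nhds hx).mono hsplit)

end NormedField

theorem stmt_3_general {p q r ξ₀ ξ : ℝ} (hdisc : discrim q r p = 0)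
    (hpos : 0 < -(r * (ξ + ξ₀) + 2) / (2 * q * (ξ + ξ₀))) :
    HasDerivAt (fun x => Real.log (-(r * (x + ξ₀) + 2) / (2 * q * (x + ξ₀))))
      (p * Real.exp (-Real.log (-(r * (ξ + ξ₀) + 2) / (2 * q * (ξ + ξ₀))))
        + q * Real.exp (Real.log (-(r * (ξ + ξ₀) + 2) / (2 * q * (ξ + ξ₀)))) + r) ξ := by
  have hden : 2 * q * (ξ + ξ₀) ≠ 0 := (div_ne_zero_iff.mp hpos.ne').2
  have hq : q ≠ 0 := right_ne_zero_of_mul (left_ne_zero_of_mul hden)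
  have hξ : ξ + ξ₀ ≠ 0 := right_ne_zero_of_mul hden
  exact hasDerivAt_log_of_riccati hpos
    ((hasDerivAt_riccati_of_discrim_eq_zero hq hξ hdisc).comp_add_const ξ ξ₀)

/-- Type 1 solution (9d) of the auxiliary ODE Φ' = exp(-Φ) + q·exp(Φ) + r
with p = 1, q ≠ 0, r ≠ 0 and r² - 4q = 0. -/
theorem stmt_3 (q r ξ₀ : ℝ) (hq : q ≠ 0) (hr : r ≠ 0) (hdisc : r ^ 2 - 4 * q = 0)
    (a b : ℝ)
    (h1 : ∀ ξ ∈ Set.Ioo a b, r * (ξ + ξ₀) ≠ 0)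
    (h2 : ∀ ξ ∈ Set.Ioo a b, r * (ξ + ξ₀) + 2 ≠ 0)
    (hpos : ∀ ξ ∈ Set.Ioo a b,
      -(2 * (r * (ξ + ξ₀) + 2)) / (r ^ 2 * (ξ + ξ₀)) > 0) :
    ∀ ξ ∈ Set.Ioo a b,
      HasDerivAt
        (fun ξ' => Real.log (-(2 * (r * (ξ' + ξ₀) + 2)) / (r ^ 2 * (ξ' + ξ₀))))
        (Real.exp (-Real.log (-(2 * (r * (ξ + ξ₀) + 2)) / (r ^ 2 * (ξ + ξ₀))))
          + q * Real.exp (Real.log (-(2 * (r * (ξ + ξ₀) + 2)) / (r ^ 2 * (ξ + ξ₀))))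
          + r) ξ := by
  have hform (s : ℝ) : -(2 * (r * s + 2)) / (r ^ 2 * s) = -(r * s + 2) / (2 * q * s) := by
    rw [show r ^ 2 * s = 2 * (2 * q * s) by linear_combination s * hdisc, ← mul_neg,
      mul_div_mul_left _ _ two_ne_zero]
  have hdiscrim : discrim q r 1 = 0 := by rwa [discrim, mul_one]
  simp only [hform] at hpos ⊢
  intro ξ hξ
  simpa only [one_mul] using stmt_3_general hdiscrim (hpos ξ hξ)
end

section
/- Let L, M, B₀, m, ξ₀ be real numbers with M ≠ 1 and L·M ≠ 1, and set c = −2B₀(LM − 1)/(M − 1). Define u, v : ℝ × ℝ → ℝ by u(x,t) = (L − 1)B₀/(M − 1) − m·(L − 1)/(LM − 1)·tanh(m·(x + c·t) + ξ₀) and v(x,t) = B₀ − m·(M − 1)/(LM − 1)·tanh(m·(x + c·t) + ξ₀). Then u and v are smooth and satisfy the coupled Burgers system ∂u/∂t − ∂²u/∂x² + 2u·∂u/∂x + L·∂(uv)/∂x = 0 and ∂v/∂t − ∂²v/∂x² + 2v·∂v/∂x + M·∂(uv)/∂x = 0 at every point (x,t) ∈ ℝ × ℝ. -/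
/-!
Up to the constant factors `L - 1` and `M - 1`, the functions `u` and `v` are the same function `w`.
Substituting `u = (L - 1) w` and `v = (M - 1) w`, both equations of the system become multiples of
the scalar Burgers equation `wₜ - wₓₓ + 2κwwₓ = 0` with `κ = LM - 1`. A function with
`wₓ = κ(w - β)² + C` and `wₜ = -2κβwₓ` solves it, because then `wₓₓ = 2κ(w - β)wₓ`; since
`tanh' = 1 - tanh²`, the kink `w = β - γ tanh(κγ(x - 2κβt) + ξ)` is such a function.
-/

section Burgers

variable {𝕜 : Type*} [NontriviallyNormedField 𝕜]

/-- The scalar Burgers equation `wₜ - wₓₓ + 2κwwₓ = 0` at every point `(x, t)`. The derivatives are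
values of `deriv`, so that regularity of `w` has to be stated separately. -/
def IsBurgersSolution (κ : 𝕜) (w : 𝕜 → 𝕜 → 𝕜) : Prop :=
  ∀ x t : 𝕜,
    deriv (fun t' => w x t') t - deriv (deriv (fun x' => w x' t)) x
      + 2 * κ * w x t * deriv (fun x' => w x' t) x = 0

/-- The coupled Burgers system with coupling constants `L` and `M` at every point `(x, t)`. As in
`IsBurgersSolution`, regularity of `u` and `v` is not included. -/
def IsCoupledBurgersSolution (L M : 𝕜) (u v : 𝕜 → 𝕜 → 𝕜) : Prop :=
  ∀ x t : 𝕜,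
    (deriv (fun t' => u x t') t - deriv (deriv (fun x' => u x' t)) x
      + 2 * u x t * deriv (fun x' => u x' t) x
      + L * deriv (fun x' => u x' t * v x' t) x = 0) ∧
    (deriv (fun t' => v x t') t - deriv (deriv (fun x' => v x' t)) x
      + 2 * v x t * deriv (fun x' => v x' t) x
      + M * deriv (fun x' => u x' t * v x' t) x = 0)

theorem IsBurgersSolution.isCoupledBurgersSolution {L M : 𝕜} {w : 𝕜 → 𝕜 → 𝕜}
    (hw : IsBurgersSolution (L * M - 1) w) (hdiff : ∀ t, Differentiable 𝕜 fun x => w x t) :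
    IsCoupledBurgersSolution L M (fun x t => (L - 1) * w x t) (fun x t => (M - 1) * w x t) := by
  intro x t
  have hprod : deriv (fun x' => (L - 1) * w x' t * ((M - 1) * w x' t)) x
      = 2 * (L - 1) * (M - 1) * w x t * deriv (fun x' => w x' t) x := by
    have hx := (hdiff t x).hasDerivAt
    refine ((hx.const_mul (L - 1)).fun_mul (hx.const_mul (M - 1))).deriv.trans ?_
    ring
  simp only [hprod, deriv_const_mul_field']
  constructor
  · linear_combination (L - 1) * hw x t
  · linear_combination (M - 1) * hw x t

theorem isBurgersSolution_of_riccati {κ β C : 𝕜} {w : 𝕜 → 𝕜 → 𝕜}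
    (hx : ∀ x t, HasDerivAt (fun x' => w x' t) (κ * (w x t - β) ^ 2 + C) x)
    (ht : ∀ x t, deriv (fun t' => w x t') t = -(2 * κ * β) * (κ * (w x t - β) ^ 2 + C)) :
    IsBurgersSolution κ w := by
  intro x t
  have hderiv : deriv (fun x' => w x' t) = fun x' => κ * (w x' t - β) ^ 2 + C :=
    funext fun x' => (hx x' t).deriv
  have hderiv₂ : deriv (deriv fun x' => w x' t) x
      = 2 * κ * (w x t - β) * (κ * (w x t - β) ^ 2 + C) := by
    rw [hderiv]
    refine (((((hx x t).sub_const β).fun_pow 2).const_mul κ).add_const C).deriv.trans ?_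
    push_cast
    ring
  rw [ht, hderiv₂, hderiv]
  ring

end Burgers

theorem hasDerivAt_tanh (y : ℝ) : HasDerivAt Real.tanh (1 - Real.tanh y ^ 2) y := by
  have hcosh : Real.cosh y ≠ 0 := (Real.cosh_pos y).ne'
  rw [funext Real.tanh_eq_sinh_div_cosh]
  refine ((Real.hasDerivAt_sinh y).fun_div (Real.hasDerivAt_cosh y) hcosh).congr_deriv ?_
  field_simp

theorem contDiff_tanh {n : WithTop ℕ∞} : ContDiff ℝ n Real.tanh := by
  rw [funext Real.tanh_eq_sinh_div_cosh]
  exact Real.contDiff_sinh.div Real.contDiff_cosh fun y => (Real.cosh_pos y).ne'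

section Kink

/-- The `tanh` travelling wave of the scalar Burgers equation with coefficient `κ`, with mean value
`β`, amplitude `γ` and phase shift `ξ`. Using the amplitude as the parameter, rather than the wave
number `κ * γ`, avoids a division by `κ`. -/
noncomputable def burgersKink (κ β γ ξ x t : ℝ) : ℝ :=
  β - γ * Real.tanh (κ * γ * (x - 2 * κ * β * t) + ξ)

variable (κ β γ ξ : ℝ)

theorem contDiff_burgersKink {n : WithTop ℕ∞} :
    ContDiff ℝ n fun X : ℝ × ℝ => burgersKink κ β γ ξ X.1 X.2 :=
  contDiff_const.sub (contDiff_const.mul (contDiff_tanh.comp (by fun_prop)))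

theorem hasDerivAt_burgersKink_space (x t : ℝ) :
    HasDerivAt (fun x' => burgersKink κ β γ ξ x' t)
      (κ * (burgersKink κ β γ ξ x t - β) ^ 2 + -(κ * γ ^ 2)) x := by
  have hphase : HasDerivAt (fun x' => κ * γ * (x' - 2 * κ * β * t) + ξ) (κ * γ * 1) x :=
    (((hasDerivAt_id' x).sub_const _).const_mul _).add_const ξ
  refine ((((hasDerivAt_tanh _).comp x hphase).const_mul γ).const_sub β).congr_deriv ?_
  rw [burgersKink]
  ring

theorem hasDerivAt_burgersKink_time (x t : ℝ) :
    HasDerivAt (fun t' => burgersKink κ β γ ξ x t')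
      (-(2 * κ * β) * (κ * (burgersKink κ β γ ξ x t - β) ^ 2 + -(κ * γ ^ 2))) t := by
  have hphase : HasDerivAt (fun t' => κ * γ * (x - 2 * κ * β * t') + ξ)
      (κ * γ * -(2 * κ * β * 1)) t :=
    ((((hasDerivAt_id' t).const_mul _).const_sub x).const_mul _).add_const ξ
  refine ((((hasDerivAt_tanh _).comp t hphase).const_mul γ).const_sub β).congr_deriv ?_
  rw [burgersKink]
  ring

theorem isBurgersSolution_burgersKink : IsBurgersSolution κ (burgersKink κ β γ ξ) :=
  isBurgersSolution_of_riccati (hasDerivAt_burgersKink_space κ β γ ξ)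
    fun x t => (hasDerivAt_burgersKink_time κ β γ ξ x t).deriv

theorem isCoupledBurgersSolution_burgersKink (L M : ℝ) :
    IsCoupledBurgersSolution L M (fun x t => (L - 1) * burgersKink (L * M - 1) β γ ξ x t)
      (fun x t => (M - 1) * burgersKink (L * M - 1) β γ ξ x t) :=
  (isBurgersSolution_burgersKink (L * M - 1) β γ ξ).isCoupledBurgersSolution fun t x =>
    (hasDerivAt_burgersKink_space (L * M - 1) β γ ξ x t).differentiableAt

end Kink

/-- The kink pair u, v built from tanh with the stated constants is a smooth
exact solution of the coupled Burgers system
uₜ - uₓₓ + 2u·uₓ + L·(uv)ₓ = 0, vₜ - vₓₓ + 2v·vₓ + M·(uv)ₓ = 0. -/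
theorem stmt_19 (L M B₀ m ξ₀ : ℝ) (hM : M ≠ 1) (hLM : L * M ≠ 1)
    (c : ℝ) (hc : c = -(2 * B₀ * (L * M - 1)) / (M - 1))
    (u v : ℝ → ℝ → ℝ)
    (hu : u = fun x t => (L - 1) * B₀ / (M - 1)
      - m * (L - 1) / (L * M - 1) * Real.tanh (m * (x + c * t) + ξ₀))
    (hv : v = fun x t => B₀
      - m * (M - 1) / (L * M - 1) * Real.tanh (m * (x + c * t) + ξ₀)) :
    (ContDiff ℝ (⊤ : ℕ∞) (fun X : ℝ × ℝ => u X.1 X.2) ∧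
     ContDiff ℝ (⊤ : ℕ∞) (fun X : ℝ × ℝ => v X.1 X.2)) ∧
    ∀ x t : ℝ,
      (deriv (fun t' => u x t') t - deriv (deriv (fun x' => u x' t)) x
        + 2 * u x t * deriv (fun x' => u x' t) x
        + L * deriv (fun x' => u x' t * v x' t) x = 0) ∧
      (deriv (fun t' => v x t') t - deriv (deriv (fun x' => v x' t)) x
        + 2 * v x t * deriv (fun x' => v x' t) x
        + M * deriv (fun x' => u x' t * v x' t) x = 0) := by
  have hM' : M - 1 ≠ 0 := sub_ne_zero.mpr hM
  have hLM' : L * M - 1 ≠ 0 := sub_ne_zero.mpr hLM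
  have hphase (x t : ℝ) : (L * M - 1) * (m / (L * M - 1))
      * (x - 2 * (L * M - 1) * (B₀ / (M - 1)) * t) + ξ₀ = m * (x + c * t) + ξ₀ := by
    rw [mul_div_cancel₀ m hLM', hc]
    ring
  have hu_kink : u = fun x t =>
      (L - 1) * burgersKink (L * M - 1) (B₀ / (M - 1)) (m / (L * M - 1)) ξ₀ x t := by
    funext x t
    rw [hu, burgersKink, hphase]
    ring
  have hv_kink : v = fun x t =>
      (M - 1) * burgersKink (L * M - 1) (B₀ / (M - 1)) (m / (L * M - 1)) ξ₀ x t := by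
    funext x t
    rw [hv, burgersKink, hphase]
    field_simp
  rw [hu_kink, hv_kink]
  exact ⟨⟨contDiff_const.mul (contDiff_burgersKink ..),
      contDiff_const.mul (contDiff_burgersKink ..)⟩,
    isCoupledBurgersSolution_burgersKink (B₀ / (M - 1)) (m / (L * M - 1)) ξ₀ L M⟩
end
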